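/- Let N ≥ 1, let b₁,…,b_N, d₁,…,d_N be nonnegative reals with B = Σbᵢ and D = Σdᵢ, B + D > 0. Let κ, κ* ∈ ℝ with κ ≥ κ*. Assign weights c₁,…,c_{2N} alternating as c_{2i-1} = bᵢ with curvature κ and c_{2i} = dᵢ with curvature κᵢ satisfying κ ≥ κᵢ ≥ κ*. Then the weighted average κ̄ = [Σᵢ cᵢ²κ⁽ⁱ⁾ + 2Σᵢ (c_{i+1}+⋯+c_{2N})·cᵢ·κ⁽ⁱ⁾] / (c₁+⋯+c_{2N})², where κ⁽ⁱ⁾ is the curvature assigned to cᵢ, satisfies κ̄ ≥ B²(κ − κ*)/(B+D)² + κ*. -/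

import Mathlib

open Real Set

/-!
The weights `wᵢ = cᵢ² + 2 (∑_{j > i} cⱼ) cᵢ` of the average `κ̄` add up to `(∑ cᵢ)²`. Keeping the
`wᵢ` of the segments of curvature `κ` but discarding all other lengths from the tails only
decreases them, and what remains adds up to `B²`. So these segments carry at least the proportion
`B² / (B + D)²` of the total weight, and all the others have curvature at least `κ*`.
-/

/-- The contribution `cᵢ² + 2 (∑_{j ∈ s, j > i} cⱼ) cᵢ` of the index `i` to the square
`(∑_{j ∈ s} cⱼ)²`, each product `cᵢ cⱼ` being attributed to its smaller index. Normalised by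
their sum, these are the weights of the average `κ̄`. -/
def tailWeight {ι R : Type*} [LinearOrder ι] [CommSemiring R] (s : Finset ι) (c : ι → R) (i : ι) :
    R :=
  c i ^ 2 + 2 * (∑ j ∈ s with i < j, c j) * c i

section TailWeight

variable {ι R : Type*} [LinearOrder ι] [CommSemiring R] {s t : Finset ι} {c : ι → R}

theorem sum_tailWeight (s : Finset ι) (c : ι → R) :
    ∑ i ∈ s, tailWeight s c i = (∑ i ∈ s, c i) ^ 2 := by
  induction s using Finset.induction_on_min with
  | empty => simp
  | insert a s ha ih =>
    have ha_notMem : a ∉ s := fun h => (ha a h).false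
    have head : tailWeight (insert a s) c a = c a ^ 2 + 2 * (∑ j ∈ s, c j) * c a := by
      rw [tailWeight, Finset.filter_insert, if_neg (lt_irrefl a), Finset.filter_true_of_mem ha]
    have tail : ∀ i ∈ s, tailWeight (insert a s) c i = tailWeight s c i := fun i hi => by
      rw [tailWeight, Finset.filter_insert, if_neg (ha i hi).not_gt, tailWeight]
    rw [Finset.sum_insert ha_notMem, Finset.sum_insert ha_notMem, head, Finset.sum_congr rfl tail,
      ih]
    ring

variable [PartialOrder R] [IsOrderedRing R]

theorem tailWeight_nonneg (hc : ∀ i ∈ s, 0 ≤ c i) {i : ι} (hi : i ∈ s) : 0 ≤ tailWeight s c i := by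
  have htail : 0 ≤ ∑ j ∈ s with i < j, c j :=
    Finset.sum_nonneg fun j hj => hc j (Finset.mem_of_mem_filter j hj)
  exact add_nonneg (pow_nonneg (hc i hi) 2) (mul_nonneg (mul_nonneg zero_le_two htail) (hc i hi))

theorem tailWeight_mono (hst : s ⊆ t) (hc : ∀ i ∈ t, 0 ≤ c i) {i : ι} (hi : i ∈ t) :
    tailWeight s c i ≤ tailWeight t c i := by
  have htail : ∑ j ∈ s with i < j, c j ≤ ∑ j ∈ t with i < j, c j :=
    Finset.sum_le_sum_of_subset_of_nonneg (Finset.filter_subset_filter _ hst)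
      fun j hj _ => hc j (Finset.mem_of_mem_filter j hj)
  exact add_le_add_right
    (mul_le_mul_of_nonneg_right (mul_le_mul_of_nonneg_left htail zero_le_two) (hc i hi)) _

theorem sq_sum_le_sum_tailWeight (hst : s ⊆ t) (hc : ∀ i ∈ t, 0 ≤ c i) :
    (∑ i ∈ s, c i) ^ 2 ≤ ∑ i ∈ s, tailWeight t c i := by
  rw [← sum_tailWeight]
  exact Finset.sum_le_sum fun i hi => tailWeight_mono hst hc (hst hi)

end TailWeight

section CenterMass

variable {ι 𝕜 : Type*} [Field 𝕜] {s t : Finset ι}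

theorem centerMass_tailWeight [LinearOrder ι] (t : Finset ι) (c K : ι → 𝕜) :
    t.centerMass (tailWeight t c) K =
      (∑ i ∈ t, c i ^ 2 * K i + 2 * ∑ i ∈ t, (∑ j ∈ t with i < j, c j) * c i * K i) /
        (∑ i ∈ t, c i) ^ 2 := by
  rw [Finset.centerMass, sum_tailWeight, smul_eq_mul, inv_mul_eq_div]
  simp only [smul_eq_mul, tailWeight, add_mul, mul_assoc, Finset.sum_add_distrib, Finset.mul_sum t]

variable [LinearOrder 𝕜] [IsStrictOrderedRing 𝕜] {m M : 𝕜}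

theorem sum_mul_sub_div_add_le_centerMass {w z : ι → 𝕜} (hst : s ⊆ t) (hw : ∀ i ∈ t, 0 ≤ w i)
    (hw_pos : 0 < ∑ i ∈ t, w i) (hm : ∀ i ∈ t, m ≤ z i) (hM : ∀ i ∈ s, M ≤ z i) :
    (∑ i ∈ s, w i) * (M - m) / ∑ i ∈ t, w i + m ≤ t.centerMass w z := by
  have excess : (∑ i ∈ s, w i) * (M - m) ≤ ∑ i ∈ t, w i * (z i - m) :=
    calc (∑ i ∈ s, w i) * (M - m) = ∑ i ∈ s, w i * (M - m) := Finset.sum_mul ..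
      _ ≤ ∑ i ∈ s, w i * (z i - m) := Finset.sum_le_sum fun i hi =>
        mul_le_mul_of_nonneg_left (sub_le_sub_right (hM i hi) m) (hw i (hst hi))
      _ ≤ ∑ i ∈ t, w i * (z i - m) := Finset.sum_le_sum_of_subset_of_nonneg hst fun i hi _ =>
        mul_nonneg (hw i hi) (sub_nonneg.2 (hm i hi))
  simp only [mul_sub (w _), Finset.sum_sub_distrib, ← Finset.sum_mul] at excess
  simp only [Finset.centerMass, smul_eq_mul, inv_mul_eq_div]
  rw [div_add' _ _ _ hw_pos.ne', div_le_div_iff_of_pos_right hw_pos]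
  linarith

theorem sq_sum_mul_sub_div_add_le_centerMass_tailWeight [LinearOrder ι] {c K : ι → 𝕜}
    (hst : s ⊆ t) (hc : ∀ i ∈ t, 0 ≤ c i) (hc_pos : 0 < ∑ i ∈ t, c i) (hmM : m ≤ M)
    (hm : ∀ i ∈ t, m ≤ K i) (hM : ∀ i ∈ s, M ≤ K i) :
    (∑ i ∈ s, c i) ^ 2 * (M - m) / (∑ i ∈ t, c i) ^ 2 + m ≤ t.centerMass (tailWeight t c) K :=
  calc (∑ i ∈ s, c i) ^ 2 * (M - m) / (∑ i ∈ t, c i) ^ 2 + m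
      ≤ (∑ i ∈ s, tailWeight t c i) * (M - m) / (∑ i ∈ t, c i) ^ 2 + m := by
        have := sub_nonneg.2 hmM
        gcongr
        exact sq_sum_le_sum_tailWeight hst hc
    _ = (∑ i ∈ s, tailWeight t c i) * (M - m) / ∑ i ∈ t, tailWeight t c i + m := by
        rw [sum_tailWeight]
    _ ≤ t.centerMass (tailWeight t c) K :=
        sum_mul_sub_div_add_le_centerMass hst (fun _ hi => tailWeight_nonneg hc hi)
          (by rw [sum_tailWeight]; exact pow_pos hc_pos 2) hm hM

end CenterMass

/-- The alternating sequence `f₀, g₀, f₁, g₁, …`. Indices start at `0`, so the odd-numbered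
segments of the paper are the even indices here. -/
def interleave {α : Type*} {N : ℕ} (f g : Fin N → α) (j : Fin (2 * N)) : α :=
  if j.val % 2 = 0 then f ⟨j.val / 2, by omega⟩ else g ⟨j.val / 2, by omega⟩

section Interleave

variable {N : ℕ}

theorem le_interleave {α : Type*} [LE α] {f g : Fin N → α} {a : α} (hf : ∀ i, a ≤ f i)
    (hg : ∀ i, a ≤ g i) (j : Fin (2 * N)) : a ≤ interleave f g j := by
  unfold interleave
  split_ifs
  exacts [hf _, hg _]

variable {M : Type*} [AddCommMonoid M]

theorem sum_interleave (f g : Fin N → M) : ∑ j, interleave f g j = ∑ i, f i + ∑ i, g i := by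
  rw [← (finProdFinEquiv.trans (finCongr (Nat.mul_comm N 2))).sum_comp, Fintype.sum_prod_type,
    ← Finset.sum_add_distrib]
  refine Finset.sum_congr rfl fun i _ => ?_
  have hdiv : (1 + 2 * i.val) / 2 = i.val := by omega
  simp [interleave, Fin.sum_univ_two, hdiv, Nat.add_mod]

theorem sum_even_interleave (f g : Fin N → M) :
    ∑ j : Fin (2 * N) with j.val % 2 = 0, interleave f g j = ∑ i, f i :=
  calc ∑ j : Fin (2 * N) with j.val % 2 = 0, interleave f g j
      = ∑ j, interleave f 0 j := by
        rw [Finset.sum_filter]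
        refine Finset.sum_congr rfl fun j _ => ?_
        unfold interleave
        split_ifs <;> rfl
    _ = ∑ i, f i := by simp [sum_interleave]

end Interleave

theorem stmt6_general {𝕜 : Type*} [Field 𝕜] [LinearOrder 𝕜] [IsStrictOrderedRing 𝕜] {N : ℕ}
    {b d Kb Kd : Fin N → 𝕜} {κ κs : 𝕜} (hb : ∀ i, 0 ≤ b i) (hd : ∀ i, 0 ≤ d i)
    (hbd : 0 < ∑ i, b i + ∑ i, d i) (hκ : κs ≤ κ) (hKb : ∀ i, κ ≤ Kb i) (hKd : ∀ i, κs ≤ Kd i) :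
    (∑ i, b i) ^ 2 * (κ - κs) / (∑ i, b i + ∑ i, d i) ^ 2 + κs ≤
      Finset.univ.centerMass (tailWeight Finset.univ (interleave b d)) (interleave Kb Kd) := by
  rw [← sum_interleave] at hbd ⊢
  rw [← sum_even_interleave b d]
  refine sq_sum_mul_sub_div_add_le_centerMass_tailWeight (Finset.filter_subset _ _)
    (fun j _ => le_interleave hb hd j) hbd hκ
    (fun j _ => le_interleave (fun i => hκ.trans (hKb i)) hKd j) fun j hj => ?_
  rw [interleave, if_pos (Finset.mem_filter.1 hj).2]
  exact hKb _

/-- Algebraic content of Corollary 1.6: with alternating segment lengths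
`c_{2i-1} = bᵢ` (curvature κ) and `c_{2i} = dᵢ` (curvature `κᵢ ∈ [κ*, κ]`), the
quadratic weighted average `κ̄` of the curvatures satisfies
`κ̄ ≥ B²(κ-κ*)/(B+D)² + κ*`, where `B = Σbᵢ`, `D = Σdᵢ`. -/
theorem stmt6 (N : ℕ) (hN : 1 ≤ N) (b d : Fin N → ℝ)
    (hb : ∀ i, 0 ≤ b i) (hd : ∀ i, 0 ≤ d i)
    (κ κs : ℝ) (hκ : κs ≤ κ) (κd : Fin N → ℝ)
    (hκd : ∀ i, κs ≤ κd i ∧ κd i ≤ κ)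
    (B D : ℝ) (hB : B = ∑ i, b i) (hD : D = ∑ i, d i) (hBD : 0 < B + D)
    (c K : Fin (2 * N) → ℝ)
    (hc : ∀ j : Fin (2 * N), c j =
      if j.val % 2 = 0 then b ⟨j.val / 2, by have := j.isLt; omega⟩ else d ⟨j.val / 2, by have := j.isLt; omega⟩)
    (hK : ∀ j : Fin (2 * N), K j =
      if j.val % 2 = 0 then κ else κd ⟨j.val / 2, by have := j.isLt; omega⟩)
    (κb : ℝ)
    (hκb : κb = (∑ i, (c i) ^ 2 * K i +
        2 * ∑ i, (∑ j ∈ Finset.univ.filter (fun j => i < j), c j) * c i * K i) /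
      (∑ i, c i) ^ 2) :
    B ^ 2 * (κ - κs) / (B + D) ^ 2 + κs ≤ κb := by
  rw [hκb, hB, hD, (funext hc : c = interleave b d), (funext hK : K = interleave (fun _ => κ) κd),
    ← centerMass_tailWeight]
  exact stmt6_general hb hd (hB ▸ hD ▸ hBD) hκ (fun _ => le_rfl) fun i => (hκd i).1
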